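/- For every K > 1, (1/16)·e^{πK} − 1/2 + c₁(K)·e^{−πK} < λ(K) < (1/16)·e^{πK} − 1/2 + c₂(K)·e^{−πK}, where c₁(K) = 1/4 + 1/(4e^{−2πK} + 1) and c₂(K) = (1/16)·(1 + 4·(5e^{−4πK} + 14e^{−2πK} + 5)/(e^{−6πK} + 7e^{−4πK} + 7e^{−2πK} + 1)). -/

import Mathlib

open Set Filter

/-- Complete elliptic integral of the first kind. -/
noncomputable def ellK (r : ℝ) : ℝ :=
  ∫ θ in (0:ℝ)..(Real.pi / 2), (1 - r ^ 2 * Real.sin θ ^ 2) ^ (-(1/2) : ℝ)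

/-- The Grötzsch modulus μ(r) = (π/2)·𝒦'(r)/𝒦(r). -/
noncomputable def mu (r : ℝ) : ℝ :=
  Real.pi / 2 * ellK (Real.sqrt (1 - r ^ 2)) / ellK r

lemma aux_pos {r : ℝ} (h0 : 0 ≤ r) (h1 : r < 1) (θ : ℝ) : 0 < 1 - r ^ 2 * Real.sin θ ^ 2 := by
  have h := Real.sin_sq_le_one θ
  have h2 : r ^ 2 < 1 := by nlinarith
  nlinarith [sq_nonneg r, sq_nonneg (Real.sin θ)]

lemma ellK_eq {r : ℝ} (h0 : 0 ≤ r) (h1 : r < 1) :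
    ellK r = ∫ θ in (0:ℝ)..(Real.pi / 2), (√(1 - r ^ 2 * Real.sin θ ^ 2))⁻¹ := by
  unfold ellK
  congr 1
  ext θ
  rw [Real.rpow_neg (aux_pos h0 h1 θ).le, Real.sqrt_eq_rpow]

lemma cont_int {r : ℝ} (h0 : 0 ≤ r) (h1 : r < 1) :
    Continuous (fun θ : ℝ => (√(1 - r ^ 2 * Real.sin θ ^ 2))⁻¹) := by
  apply Continuous.inv₀ (by fun_prop)
  intro θ
  exact (Real.sqrt_pos.2 (aux_pos h0 h1 θ)).ne'

lemma U_lt {x : ℝ} (h0 : 0 < x) (h1 : x < 1) : 2 * √x / (1 + x) < 1 := by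
  rw [div_lt_one (by linarith)]
  have hs := Real.sq_sqrt h0.le
  have : √x < 1 := by rw [Real.sqrt_lt' one_pos]; simpa using h1
  nlinarith [Real.sqrt_nonneg x]

lemma landen {x : ℝ} (h0 : 0 < x) (h1 : x < 1) :
    ellK (2 * √x / (1 + x)) = (1 + x) * ellK x := by
  have hU0 : 0 ≤ 2 * √x / (1 + x) := by positivity
  have hU1 := U_lt h0 h1
  have hU2 : (2 * √x / (1 + x)) ^ 2 = 4 * x / (1 + x) ^ 2 := by
    rw [div_pow, mul_pow, Real.sq_sqrt h0.le]; norm_num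
  have hpi := Real.pi_pos
  rw [ellK_eq hU0 hU1, ellK_eq h0.le h1, ← intervalIntegral.integral_const_mul]
  set G : ℝ → ℝ := fun θ => (√(1 - (2 * √x / (1 + x)) ^ 2 * Real.sin θ ^ 2))⁻¹ with hG
  have hGc : Continuous G := cont_int hU0 hU1
  let S : ℝ → ℝ := fun θ => (1 + x) * Real.sin θ / (1 + x * Real.sin θ ^ 2)
  have hden : ∀ θ : ℝ, 0 < 1 + x * Real.sin θ ^ 2 := fun θ => by positivity
  have hden2 : ∀ θ : ℝ, 0 < 1 - x * Real.sin θ ^ 2 := fun θ => by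
    have h := Real.sin_sq_le_one θ
    nlinarith
  have hSc : Continuous S := by
    apply Continuous.div (by fun_prop) (by fun_prop)
    intro θ; exact (hden θ).ne'
  have hS2 : ∀ θ, 1 - S θ ^ 2 = (Real.cos θ * √(1 - x ^ 2 * Real.sin θ ^ 2) / (1 + x * Real.sin θ ^ 2)) ^ 2 := by
    intro θ
    have := (hden θ).ne'
    simp only [S]
    rw [div_pow, div_pow, mul_pow _ (√_), Real.sq_sqrt (aux_pos h0.le h1 θ).le, Real.cos_sq']
    field_simp
    ring
  let f : ℝ → ℝ := fun θ => Real.arcsin (S θ)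
  let f' : ℝ → ℝ := fun θ => (1 + x) * (1 - x * Real.sin θ ^ 2) /
    ((1 + x * Real.sin θ ^ 2) * √(1 - x ^ 2 * Real.sin θ ^ 2))
  have hfc : Continuous f := Real.continuous_arcsin.comp hSc
  have hSle : ∀ θ, -1 ≤ S θ ∧ S θ ≤ 1 := by
    intro θ
    have h := hS2 θ
    have h2 : 0 ≤ 1 - S θ ^ 2 := by rw [h]; positivity
    constructor <;> nlinarith
  have hval : ∀ θ, G (f θ) * f' θ = (1 + x) * (√(1 - x ^ 2 * Real.sin θ ^ 2))⁻¹ := by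
    intro θ
    have a1 := (hden θ).ne'
    have a2 := hden2 θ
    have a3 := Real.sqrt_pos.2 (aux_pos h0.le h1 θ)
    have e : 1 - (2 * √x / (1 + x)) ^ 2 * Real.sin (f θ) ^ 2
        = ((1 - x * Real.sin θ ^ 2) / (1 + x * Real.sin θ ^ 2)) ^ 2 := by
      rw [hU2, Real.sin_arcsin (hSle θ).1 (hSle θ).2]
      simp only [S]
      field_simp
      ring
    simp only [hG, f', e]
    rw [Real.sqrt_sq (div_pos a2 (hden θ)).le]
    have := a2.ne'
    field_simp
  have hder : ∀ θ ∈ Ioo (0:ℝ) (Real.pi / 2), HasDerivAt f (f' θ) θ := by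
    intro θ hθ
    have a1 := (hden θ).ne'
    have a2 := hden2 θ
    have a3 := Real.sqrt_pos.2 (aux_pos h0.le h1 θ)
    have hc : 0 < Real.cos θ := Real.cos_pos_of_mem_Ioo ⟨by linarith [hθ.1], hθ.2⟩
    have hpos : 0 < 1 - S θ ^ 2 := by
      rw [hS2]; have := hden θ; positivity
    have hd : HasDerivAt S ((1 + x) * Real.cos θ * (1 - x * Real.sin θ ^ 2) / (1 + x * Real.sin θ ^ 2) ^ 2) θ := by
      have d1 : HasDerivAt (fun θ => (1 + x) * Real.sin θ) ((1 + x) * Real.cos θ) θ :=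
        (Real.hasDerivAt_sin θ).const_mul _
      have d2 : HasDerivAt (fun θ => 1 + x * Real.sin θ ^ 2) (x * (2 * Real.sin θ * Real.cos θ)) θ := by
        have := (((Real.hasDerivAt_sin θ).pow 2).const_mul x).const_add 1
        simpa using this
      refine (d1.div d2 a1).congr_deriv ?_
      congr 1
      ring
    have := (Real.hasDerivAt_arcsin (x := S θ) (by nlinarith) (by nlinarith)).comp θ hd
    refine this.congr_deriv ?_
    rw [hS2, Real.sqrt_sq (by have := hden θ; positivity)]
    simp only [f']
    field_simp
  have key := intervalIntegral.integral_comp_mul_deriv''' (a := 0) (b := Real.pi / 2) (f := f) (f' := f') (g := G)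
    hfc.continuousOn (by
      intro θ hθ
      rw [min_eq_left (by positivity), max_eq_right (by positivity)] at hθ
      exact (hder θ hθ).hasDerivWithinAt) hGc.continuousOn
    (hGc.continuousOn.integrableOn_compact (isCompact_uIcc.image hfc)) (by
      have : (fun θ => (G ∘ f) θ * f' θ) = fun θ => (1 + x) * (√(1 - x ^ 2 * Real.sin θ ^ 2))⁻¹ := by
        ext θ; exact hval θ
      rw [this]
      exact ((cont_int h0.le h1).const_mul _ |>.continuousOn).integrableOn_compact isCompact_uIcc)
  have f0 : f 0 = 0 := by simp [f, S]
  have f1 : f (Real.pi / 2) = Real.pi / 2 := by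
    simp only [f, S, Real.sin_pi_div_two]
    rw [show (1 + x) * 1 / (1 + x * 1 ^ 2) = 1 by field_simp; ]
    exact Real.arcsin_one
  rw [f0, f1] at key
  rw [← key]
  congr 1
  ext θ; exact hval θ

lemma ellK_lower {r : ℝ} (h0 : 0 ≤ r) (h1 : r < 1) : Real.pi / 2 ≤ ellK r := by
  rw [ellK_eq h0 h1]
  have hpi := Real.pi_pos
  have : ∫ θ in (0:ℝ)..(Real.pi / 2), (1:ℝ) = Real.pi / 2 := by simp
  refine this.symm.le.trans ?_
  apply intervalIntegral.integral_mono_on (by positivity) (by simp)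
    ((cont_int h0 h1).intervalIntegrable _ _)
  intro θ _
  rw [one_le_inv₀ (Real.sqrt_pos.2 (aux_pos h0 h1 θ)), Real.sqrt_le_left zero_le_one]
  have : 0 ≤ r ^ 2 * Real.sin θ ^ 2 := by positivity
  linarith

lemma ellK_pos {r : ℝ} (h0 : 0 ≤ r) (h1 : r < 1) : 0 < ellK r :=
  lt_of_lt_of_le (by have := Real.pi_pos; positivity) (ellK_lower h0 h1)

lemma ellK_upper {r : ℝ} (h0 : 0 ≤ r) (h1 : r < 1) : ellK r ≤ Real.pi / 2 * (√(1 - r ^ 2))⁻¹ := by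
  rw [ellK_eq h0 h1]
  have hpi := Real.pi_pos
  have : ∫ θ in (0:ℝ)..(Real.pi / 2), (√(1 - r ^ 2))⁻¹ = Real.pi / 2 * (√(1 - r ^ 2))⁻¹ := by simp
  rw [← this]
  apply intervalIntegral.integral_mono_on (by positivity) 
    ((cont_int h0 h1).intervalIntegrable _ _) (by simp)
  intro θ _
  have hp : 0 < 1 - r ^ 2 := by nlinarith
  apply inv_anti₀ (Real.sqrt_pos.2 hp)
  apply Real.sqrt_le_sqrt
  have h := Real.sin_sq_le_one θ
  nlinarith [sq_nonneg r]

lemma ell_compl_lt {r : ℝ} (h0 : 0 < r) : √(1 - r ^ 2) < 1 := by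
  rw [Real.sqrt_lt' one_pos]; nlinarith

lemma ellK_compl_eq {r : ℝ} (h0 : 0 < r) (h1 : r < 1) :
    ellK (√(1 - r ^ 2)) = ∫ θ in (0:ℝ)..(Real.pi / 2), (√(Real.sin θ ^ 2 + r ^ 2 * Real.cos θ ^ 2))⁻¹ := by
  rw [ellK_eq (Real.sqrt_nonneg _) (ell_compl_lt h0), Real.sq_sqrt (by nlinarith)]
  have := intervalIntegral.integral_comp_sub_left (a := 0) (b := Real.pi / 2)
    (fun θ => (√(1 - (1 - r ^ 2) * Real.sin θ ^ 2))⁻¹) (Real.pi / 2)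
  simp only [sub_self, sub_zero, Real.sin_pi_div_two_sub] at this
  rw [← this]
  congr 1
  ext θ
  congr 2
  rw [Real.sin_sq]; ring

lemma compl_pos {r : ℝ} (h0 : 0 < r) (h1 : r < 1) (θ : ℝ) :
    0 < Real.sin θ ^ 2 + r ^ 2 * Real.cos θ ^ 2 := by
  rw [Real.sin_sq]
  have h := Real.cos_sq_le_one θ
  by_cases hc : Real.cos θ = 0
  · simp [hc]
  · have : 0 < r ^ 2 * Real.cos θ ^ 2 := by positivity
    linarith

lemma compl_cont {r : ℝ} (h0 : 0 < r) (h1 : r < 1) :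
    Continuous (fun θ : ℝ => (√(Real.sin θ ^ 2 + r ^ 2 * Real.cos θ ^ 2))⁻¹) := by
  apply Continuous.inv₀ (by fun_prop)
  intro θ
  exact (Real.sqrt_pos.2 (compl_pos h0 h1 θ)).ne'

lemma compl_lower {r : ℝ} (h0 : 0 < r) (h1 : r < 1) : Real.log (1 / r) ≤ ellK (√(1 - r ^ 2)) := by
  rw [ellK_compl_eq h0 h1]
  have hpi := Real.pi_pos
  have hI : ∫ θ in (0:ℝ)..(Real.pi / 2), (θ + r)⁻¹ = Real.log ((Real.pi / 2 + r) / r) := by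
    rw [intervalIntegral.integral_comp_add_right (fun t => t⁻¹) r, integral_inv_of_pos (by linarith) (by positivity)]
    simp
  have hc : ContinuousOn (fun θ : ℝ => (θ + r)⁻¹) (Set.uIcc 0 (Real.pi / 2)) := by
    apply ContinuousOn.inv₀ (by fun_prop)
    intro θ hθ
    rw [Set.uIcc_of_le (by positivity)] at hθ
    linarith [hθ.1]
  calc Real.log (1 / r) ≤ Real.log ((Real.pi / 2 + r) / r) := by
        apply Real.log_le_log (by positivity)
        gcongr
        linarith [Real.pi_gt_three]
    _ = _ := hI.symm
    _ ≤ _ := by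
      apply intervalIntegral.integral_mono_on (by positivity) hc.intervalIntegrable
        ((compl_cont h0 h1).intervalIntegrable _ _)
      intro θ hθ
      apply inv_anti₀ (Real.sqrt_pos.2 (compl_pos h0 h1 θ))
      rw [Real.sqrt_le_left (by linarith [hθ.1])]
      have s1 := Real.sin_le hθ.1
      have s0 := Real.sin_nonneg_of_nonneg_of_le_pi hθ.1 (by linarith [hθ.2])
      have h := Real.cos_sq_le_one θ
      nlinarith [sq_nonneg r, mul_nonneg hθ.1 h0.le]

lemma compl_upper {r : ℝ} (h0 : 0 < r) (h1 : r < 1) :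
    ellK (√(1 - r ^ 2)) ≤ Real.pi / 2 + (√(1 - r ^ 2))⁻¹ * Real.log (3 / r) := by
  rw [ellK_compl_eq h0 h1]
  have hpi := Real.pi_pos
  have hp : 0 < 1 - r ^ 2 := by nlinarith
  have hsp := Real.sqrt_pos.2 hp
  have hcc : Continuous (fun θ : ℝ => Real.cos θ / r * (√(1 + (Real.sin θ / r) ^ 2))⁻¹) := by
    apply Continuous.mul (by fun_prop)
    apply Continuous.inv₀ (by fun_prop)
    intro θ
    positivity
  have hI : ∫ θ in (0:ℝ)..(Real.pi / 2), Real.cos θ / r * (√(1 + (Real.sin θ / r) ^ 2))⁻¹ = Real.arsinh (1 / r) := by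
    have := intervalIntegral.integral_eq_sub_of_hasDerivAt (a := 0) (b := Real.pi / 2)
      (f := fun θ => Real.arsinh (Real.sin θ / r)) (f' := fun θ => Real.cos θ / r * (√(1 + (Real.sin θ / r) ^ 2))⁻¹)
      (by
        intro θ _
        have := ((Real.hasDerivAt_sin θ).div_const r).arsinh
        refine this.congr_deriv ?_
        simp [mul_comm]) (hcc.intervalIntegrable _ _)
    rw [this]; simp
  have hA : Real.arsinh (1 / r) ≤ Real.log (3 / r) := by
    unfold Real.arsinh
    apply Real.log_le_log (by positivity)
    have : √(1 + (1 / r) ^ 2) ≤ 2 / r := by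
      rw [Real.sqrt_le_left (by positivity)]
      have : 1 ≤ (1 / r) ^ 2 := by
        rw [div_pow, le_div_iff₀ (by positivity)]; nlinarith
      have e : (2 / r) ^ 2 = 4 * (1 / r) ^ 2 := by ring
      linarith
    calc _ ≤ 1 / r + 2 / r := by linarith
      _ = 3 / r := by ring
  have hJ : ∫ θ in (0:ℝ)..(Real.pi / 2), ((1:ℝ) + (√(1 - r ^ 2))⁻¹ * (Real.cos θ / r * (√(1 + (Real.sin θ / r) ^ 2))⁻¹))
      = Real.pi / 2 + (√(1 - r ^ 2))⁻¹ * Real.arsinh (1 / r) := by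
    rw [intervalIntegral.integral_add (by simp) ((hcc.const_mul _).intervalIntegrable _ _),
      intervalIntegral.integral_const_mul, hI]
    simp
  calc _ ≤ _ := ?_
    _ = _ := hJ
    _ ≤ _ := by gcongr
  apply intervalIntegral.integral_mono_on (by positivity)
    ((compl_cont h0 h1).intervalIntegrable _ _)
    ((continuous_const.add (hcc.const_mul _)).intervalIntegrable _ _)
  intro θ hθ
  have s0 := Real.sin_nonneg_of_nonneg_of_le_pi hθ.1 (by linarith [hθ.2])
  have c0 := Real.cos_nonneg_of_neg_pi_div_two_le_of_le (by linarith [hθ.1]) hθ.2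
  have c1 := Real.cos_le_one θ
  have hsc := Real.sin_sq_add_cos_sq θ
  set s := Real.sin θ
  set c := Real.cos θ
  have hD : 0 < s ^ 2 + r ^ 2 * c ^ 2 := compl_pos h0 h1 θ
  set D := √(s ^ 2 + r ^ 2 * c ^ 2) with hDdef
  have hDp : 0 < D := Real.sqrt_pos.2 hD
  have hD2 : D ^ 2 = s ^ 2 + r ^ 2 * c ^ 2 := Real.sq_sqrt hD.le
  have hsD : s ≤ D := by
    apply Real.le_sqrt_of_sq_le; nlinarith [mul_nonneg (sq_nonneg r) (sq_nonneg c)]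
  have h2 : (√(1 - r ^ 2))⁻¹ * (c / r * (√(1 + (s / r) ^ 2))⁻¹) = c * (√((1 - r ^ 2) * (r ^ 2 + s ^ 2)))⁻¹ := by
    have e : r ^ 2 + s ^ 2 = r ^ 2 * (1 + (s / r) ^ 2) := by field_simp
    rw [e, Real.sqrt_mul hp.le, Real.sqrt_mul (by positivity), Real.sqrt_sq h0.le]
    rw [mul_inv, mul_inv]; ring
  have h3 : D⁻¹ ≤ (√((1 - r ^ 2) * (r ^ 2 + s ^ 2)))⁻¹ := by
    apply inv_anti₀ (Real.sqrt_pos.2 (by positivity))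
    apply Real.sqrt_le_sqrt
    nlinarith [mul_nonneg (sq_nonneg r) (sq_nonneg r)]
  have h4 : (1 - c) * D⁻¹ ≤ 1 := by
    rw [← div_eq_mul_inv, div_le_one hDp]
    have : 1 - c ≤ s := by
      by_contra hh
      push Not at hh
      nlinarith
    linarith
  change _ ≤ 1 + (√(1 - r ^ 2))⁻¹ * (c / r * (√(1 + (s / r) ^ 2))⁻¹)
  rw [h2]
  have := mul_le_mul_of_nonneg_left h3 c0
  linarith

lemma mu_half {x : ℝ} (h0 : 0 < x) (h1 : x < 1) : mu x = 2 * mu (2 * √x / (1 + x)) := by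
  have hx : 0 < 1 + x := by linarith
  have hx' : 0 < 1 - x := by linarith
  have hy : √(1 - (2 * √x / (1 + x)) ^ 2) = (1 - x) / (1 + x) := by
    have : 1 - (2 * √x / (1 + x)) ^ 2 = ((1 - x) / (1 + x)) ^ 2 := by
      rw [div_pow, mul_pow, Real.sq_sqrt h0.le]
      field_simp
      ring
    rw [this, Real.sqrt_sq (by positivity)]
  have y0 : 0 < (1 - x) / (1 + x) := by positivity
  have y1 : (1 - x) / (1 + x) < 1 := by rw [div_lt_one hx]; linarith
  have hz : 2 * √((1 - x) / (1 + x)) / (1 + (1 - x) / (1 + x)) = √(1 - x ^ 2) := by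
    have e : 1 - x ^ 2 = (1 + x) ^ 2 * ((1 - x) / (1 + x)) := by field_simp; ring
    rw [e, Real.sqrt_mul (by positivity), Real.sqrt_sq hx.le]
    field_simp
    ring
  have l1 := landen h0 h1
  have l2 := landen y0 y1
  rw [hz] at l2
  have hp := ellK_pos h0.le h1
  unfold mu
  rw [hy, l1, l2]
  field_simp
  ring

lemma landen_down {k : ℝ} (h0 : 0 < k) (h1 : k < 1) :
    ∃ s : ℝ, 0 < s ∧ s < 1 ∧ k = 2 * s / (1 + s ^ 2) ∧ mu (s ^ 2) = 2 * mu k := by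
  have hp : 0 < 1 - k ^ 2 := by nlinarith
  have hw := Real.sqrt_pos.2 hp
  have hw2 := Real.sq_sqrt hp.le
  set w := √(1 - k ^ 2)
  have s0 : 0 < k / (1 + w) := by positivity
  have s1 : k / (1 + w) < 1 := by rw [div_lt_one (by positivity)]; linarith
  have hk : k = 2 * (k / (1 + w)) / (1 + (k / (1 + w)) ^ 2) := by
    have : (1 + (k / (1 + w)) ^ 2) = 2 / (1 + w) := by
      have e : k ^ 2 = (1 - w) * (1 + w) := by linarith
      rw [div_pow, e]
      field_simp
      ring
    rw [this]
    field_simp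
  refine ⟨k / (1 + w), s0, s1, hk, ?_⟩
  have := mu_half (x := (k / (1 + w)) ^ 2) (by positivity) (by nlinarith)
  rw [Real.sqrt_sq s0.le, ← hk] at this
  exact this

/-- auxiliary lower-bound function -/
noncomputable def hh (k : ℝ) : ℝ := (1 - √(1 - k)) / (1 + √(1 - k))

lemma hh_spec {k : ℝ} (h0 : 0 < k) (h1 : k < 1) :
    0 < hh k ∧ hh k < 1 ∧ k = 4 * hh k / (1 + hh k) ^ 2 := by
  have hp : 0 < 1 - k := by linarith
  have hw := Real.sqrt_pos.2 hp
  have hw2 := Real.sq_sqrt hp.le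
  have hw1 : √(1 - k) < 1 := by nlinarith
  unfold hh
  set w := √(1 - k)
  have : 0 < 1 - w := by linarith
  refine ⟨by positivity, by rw [div_lt_one (by positivity)]; linarith, ?_⟩
  have e : 1 + (1 - w) / (1 + w) = 2 / (1 + w) := by field_simp; ring
  rw [e]
  field_simp
  nlinarith

lemma H_lt {a b : ℝ} (ha : 0 < a) (hab : a < b) (hb : b < 1) :
    4 * a / (1 + a) ^ 2 < 4 * b / (1 + b) ^ 2 := by
  rw [div_lt_div_iff₀ (by positivity) (by nlinarith)]
  have : 0 < (b - a) * (1 - a * b) := mul_pos (by linarith) (by nlinarith)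
  nlinarith

lemma lt_of_H_lt {a b : ℝ} (ha : a < 1) (hb : 0 < b)
    (h : 4 * a / (1 + a) ^ 2 < 4 * b / (1 + b) ^ 2) : a < b := by
  by_contra hc
  push Not at hc
  rcases hc.eq_or_lt with rfl | hc
  · exact lt_irrefl _ h
  · exact lt_asymm h (H_lt hb hc ha)

lemma hh_step {s : ℝ} (s0 : 0 < s) (s1 : s < 1) :
    hh (s ^ 2) < hh (2 * s / (1 + s ^ 2)) ^ 2 := by
  have k0 : 0 < 2 * s / (1 + s ^ 2) := by positivity
  have k1 : 2 * s / (1 + s ^ 2) < 1 := by rw [div_lt_one (by positivity)]; nlinarith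
  obtain ⟨e0, e1, he⟩ := hh_spec k0 k1
  obtain ⟨a0, a1, ha⟩ := hh_spec (k := s ^ 2) (by positivity) (by nlinarith)
  set e := hh (2 * s / (1 + s ^ 2))
  set a := hh (s ^ 2)
  apply lt_of_H_lt a1 (by positivity)
  rw [← ha]
  have hs : s < 2 * e / (1 + e ^ 2) := by
    by_contra hc
    push Not at hc
    set t := 2 * e / (1 + e ^ 2) with ht
    have t0 : 0 < t := by positivity
    have m : 2 * t / (1 + t ^ 2) ≤ 2 * s / (1 + s ^ 2) := by
      rw [div_le_div_iff₀ (by positivity) (by positivity)]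
      have : 0 ≤ (s - t) * (1 - s * t) := mul_nonneg (by linarith) (by nlinarith)
      nlinarith
    have m2 : 4 * e / (1 + e) ^ 2 < 2 * t / (1 + t ^ 2) := by
      have : 2 * t / (1 + t ^ 2) = 4 * e * (1 + e ^ 2) / ((1 + e ^ 2) ^ 2 + 4 * e ^ 2) := by
        rw [ht]; field_simp; ring
      rw [this, div_lt_div_iff₀ (by positivity) (by positivity)]
      have : 0 < 4 * e * (2 * e * (1 - e) ^ 2) := by
        have : 0 < 1 - e := by linarith
        positivity
      nlinarith
    linarith
  have : 4 * e ^ 2 / (1 + e ^ 2) ^ 2 = (2 * e / (1 + e ^ 2)) ^ 2 := by rw [div_pow]; ring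
  rw [this]
  exact pow_lt_pow_left₀ hs s0.le (by norm_num)

lemma step {k : ℝ} (h0 : 0 < k) (h1 : k < 1) :
    ∃ x : ℝ, 0 < x ∧ x ≤ k ^ 2 ∧ mu x = 2 * mu k ∧ Real.log (4 / x) < 2 * Real.log (4 / k) ∧
      2 * -Real.log (hh k) < -Real.log (hh x) := by
  obtain ⟨s, s0, s1, hk, hm⟩ := landen_down h0 h1
  have hsk : s < k := by
    rw [hk, lt_div_iff₀ (by positivity)]; nlinarith
  refine ⟨s ^ 2, by positivity, by gcongr, hm, ?_, ?_⟩
  · have : 2 * Real.log (4 / k) = Real.log ((4 / k) ^ 2) := by rw [Real.log_pow]; norm_num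
    rw [this]
    apply Real.log_lt_log (by positivity)
    rw [show 4 / s ^ 2 = (2 / s) ^ 2 by rw [div_pow]; norm_num]
    apply pow_lt_pow_left₀ _ (by positivity) (by norm_num)
    rw [hk, div_lt_div_iff₀ s0 (by positivity)]
    field_simp
    nlinarith [sq_nonneg s]
  · have h := hh_step s0 s1
    rw [← hk] at h
    have a0 := (hh_spec (k := s ^ 2) (by positivity) (by nlinarith)).1
    have := Real.log_lt_log a0 h
    rw [Real.log_pow] at this
    push_cast at this
    linarith

lemma seq_step {k : ℝ} (h0 : 0 < k) (h1 : k < 1) (n : ℕ) :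
    ∃ x : ℝ, 0 < x ∧ x ≤ k ^ (n + 1) ∧ mu x = 2 ^ n * mu k ∧
      Real.log (4 / x) ≤ 2 ^ n * Real.log (4 / k) ∧
      2 ^ n * -Real.log (hh k) ≤ -Real.log (hh x) := by
  induction n with
  | zero => exact ⟨k, h0, by simp, by simp, by simp, by simp⟩
  | succ n ih =>
    obtain ⟨x, x0, xk, a, b, c⟩ := ih
    have x1 : x < 1 := xk.trans_lt (pow_lt_one₀ h0.le h1 (by simp))
    obtain ⟨y, y0, yk, a', b', c'⟩ := step x0 x1
    refine ⟨y, y0, ?_, by rw [a', a]; ring, by rw [pow_succ]; linarith, by rw [pow_succ]; linarith⟩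
    calc y ≤ x ^ 2 := yk
      _ ≤ (k ^ (n + 1)) ^ 2 := by gcongr
      _ = k ^ ((n + 1) * 2) := by rw [pow_mul]
      _ ≤ _ := pow_le_pow_of_le_one h0.le h1.le (by omega)

lemma mu_le {r : ℝ} (h0 : 0 < r) (h1 : r < 1) :
    mu r ≤ Real.pi / 2 + (√(1 - r ^ 2))⁻¹ * Real.log (3 / r) := by
  refine le_trans ?_ (compl_upper h0 h1)
  have hp := ellK_pos h0.le h1
  have hq := ellK_pos (Real.sqrt_nonneg _) (ell_compl_lt h0)
  unfold mu
  rw [div_le_iff₀ hp, mul_comm]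
  exact mul_le_mul_of_nonneg_left (ellK_lower h0.le h1) hq.le

lemma le_mu {r : ℝ} (h0 : 0 < r) (h1 : r < 1) :
    √(1 - r ^ 2) * Real.log (1 / r) ≤ mu r := by
  have hp := ellK_pos h0.le h1
  have hpi := Real.pi_pos
  have hw : 0 < √(1 - r ^ 2) := Real.sqrt_pos.2 (by nlinarith)
  have hl : 0 ≤ Real.log (1 / r) := Real.log_nonneg (by rw [le_div_iff₀ h0]; linarith)
  unfold mu
  rw [le_div_iff₀ hp]
  calc √(1 - r ^ 2) * Real.log (1 / r) * ellK r
      ≤ √(1 - r ^ 2) * Real.log (1 / r) * (Real.pi / 2 * (√(1 - r ^ 2))⁻¹) := by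
        gcongr; exact ellK_upper h0.le h1
    _ = Real.pi / 2 * Real.log (1 / r) := by field_simp
    _ ≤ _ := by gcongr; exact compl_lower h0 h1

lemma tendsto_ell : Tendsto (fun r : ℝ => Real.log (4 / r)) (nhdsWithin 0 (Ioi 0)) atTop := by
  have h : Tendsto (fun r : ℝ => 4 / r) (nhdsWithin 0 (Ioi 0)) atTop := by
    simp only [div_eq_mul_inv]
    exact tendsto_inv_nhdsGT_zero.const_mul_atTop (by norm_num)
  exact Real.tendsto_log_atTop.comp h

lemma asym {ε : ℝ} (hε : 0 < ε) : ∃ δ : ℝ, 0 < δ ∧ ∀ x : ℝ, 0 < x → x < δ → x < 1 →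
    mu x ≤ (1 + ε) * Real.log (4 / x) ∧ (1 - ε) * Real.log (4 / x) ≤ mu x := by
  have hl := tendsto_ell
  have hinv : Tendsto (fun r : ℝ => (Real.log (4 / r))⁻¹) (nhdsWithin 0 (Ioi 0)) (nhds 0) :=
    tendsto_inv_atTop_zero.comp hl
  have hw : Tendsto (fun r : ℝ => √(1 - r ^ 2)) (nhdsWithin 0 (Ioi 0)) (nhds 1) := by
    have : Continuous (fun r : ℝ => √(1 - r ^ 2)) := by fun_prop
    have := (this.tendsto 0).mono_left (nhdsWithin_le_nhds (s := Ioi 0))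
    simpa using this
  have u : Tendsto (fun r : ℝ => Real.pi / 2 * (Real.log (4 / r))⁻¹ +
      (√(1 - r ^ 2))⁻¹ * (1 - Real.log (4 / 3) * (Real.log (4 / r))⁻¹)) (nhdsWithin 0 (Ioi 0)) (nhds 1) := by
    have := (hinv.const_mul (Real.pi / 2)).add ((hw.inv₀ one_ne_zero).mul
      ((hinv.const_mul (Real.log (4 / 3))).const_sub 1))
    simpa using this
  have l : Tendsto (fun r : ℝ => √(1 - r ^ 2) * (1 - Real.log 4 * (Real.log (4 / r))⁻¹))
      (nhdsWithin 0 (Ioi 0)) (nhds 1) := by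
    have := hw.mul ((hinv.const_mul (Real.log 4)).const_sub 1)
    simpa using this
  have ev := (u.eventually_lt_const (show 1 < 1 + ε by linarith)).and
    ((l.eventually_const_lt (show 1 - ε < 1 by linarith)).and (hl.eventually_gt_atTop 0))
  obtain ⟨δ, hδ, hs⟩ := mem_nhdsGT_iff_exists_Ioo_subset.1 ev
  refine ⟨δ, hδ, fun x x0 xδ x1 => ?_⟩
  obtain ⟨h1, h2, h3⟩ := hs ⟨x0, xδ⟩
  have e3 : Real.log (3 / x) = Real.log (4 / x) - Real.log (4 / 3) := by
    rw [← Real.log_div (by positivity) (by norm_num)]; congr 1; field_simp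
  have e1 : Real.log (1 / x) = Real.log (4 / x) - Real.log 4 := by
    rw [← Real.log_div (by positivity) (by norm_num)]; congr 1; field_simp
  constructor
  · refine (mu_le x0 x1).trans ?_
    have := mul_le_mul_of_nonneg_right h1.le h3.le
    rw [e3]
    refine le_trans (le_of_eq ?_) this
    generalize (√(1 - x ^ 2))⁻¹ = w
    field_simp
  · refine le_trans ?_ (le_mu x0 x1)
    have := mul_le_mul_of_nonneg_right h2.le h3.le
    rw [e1]
    refine le_trans this (le_of_eq ?_)
    field_simp

lemma mu_bounds {k : ℝ} (h0 : 0 < k) (h1 : k < 1) :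
    mu k ≤ Real.log (4 / k) ∧ -Real.log (hh k) ≤ mu k := by
  have hL : 0 < Real.log (4 / k) := Real.log_pos (by rw [lt_div_iff₀ h0]; linarith)
  have hG : 0 < -Real.log (hh k) := by
    obtain ⟨a, b, _⟩ := hh_spec h0 h1
    linarith [Real.log_neg a b]
  have main : ∀ ε : ℝ, 0 < ε → ε < 1 →
      mu k ≤ (1 + ε) * Real.log (4 / k) ∧ (1 - ε) * -Real.log (hh k) ≤ mu k := by
    intro ε hε hε1
    obtain ⟨δ, hδ, H⟩ := asym hε
    obtain ⟨n, hn⟩ := exists_pow_lt_of_lt_one hδ h1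
    obtain ⟨x, x0, xk, a, b, c⟩ := seq_step h0 h1 n
    have x1 : x < 1 := xk.trans_lt (pow_lt_one₀ h0.le h1 (by simp))
    have xδ : x < δ := lt_of_le_of_lt (xk.trans (pow_le_pow_of_le_one h0.le h1.le (by omega))) hn
    obtain ⟨p, q⟩ := H x x0 xδ x1
    have h2 : (0:ℝ) < 2 ^ n := by positivity
    have hx4 : -Real.log (hh x) ≤ Real.log (4 / x) := by
      obtain ⟨a0, a1, ha⟩ := hh_spec x0 x1
      rw [← Real.log_inv]
      apply Real.log_le_log (by positivity)
      rw [inv_eq_one_div, div_le_div_iff₀ a0 x0]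
      have : x ≤ 4 * hh x := by
        conv_lhs => rw [ha]
        apply div_le_self (by positivity)
        nlinarith
      linarith
    constructor
    · rw [a] at p
      have : (1 + ε) * Real.log (4 / x) ≤ (1 + ε) * (2 ^ n * Real.log (4 / k)) := by gcongr
      refine le_of_mul_le_mul_left ?_ h2
      linarith
    · rw [a] at q
      have : (1 - ε) * (2 ^ n * -Real.log (hh k)) ≤ (1 - ε) * Real.log (4 / x) := 
        mul_le_mul_of_nonneg_left (c.trans hx4) (by linarith)
      refine le_of_mul_le_mul_left ?_ h2
      linarith
  constructor
  · by_contra hc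
    push Not at hc
    have m := (main (min (1/2) ((mu k - Real.log (4 / k)) / (2 * Real.log (4 / k))))
      (lt_min (by norm_num) (div_pos (by linarith) (by linarith))) (by simp; left; norm_num)).1
    have := mul_le_mul_of_nonneg_right (min_le_right (1/2) ((mu k - Real.log (4 / k)) / (2 * Real.log (4 / k)))) hL.le
    have e : (mu k - Real.log (4 / k)) / (2 * Real.log (4 / k)) * Real.log (4 / k) = (mu k - Real.log (4 / k)) / 2 := by
      field_simp
    rw [e] at this
    linarith
  · by_contra hc
    push Not at hc
    set g := -Real.log (hh k)
    have m := (main (min (1/2) ((g - mu k) / (2 * g)))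
      (lt_min (by norm_num) (div_pos (by linarith) (by linarith))) (by simp; left; norm_num)).2
    have := mul_le_mul_of_nonneg_right (min_le_right (1/2) ((g - mu k) / (2 * g))) hG.le
    have e : (g - mu k) / (2 * g) * g = (g - mu k) / 2 := by
      field_simp
    rw [e] at this
    linarith

lemma mu_bounds_strict {k : ℝ} (h0 : 0 < k) (h1 : k < 1) :
    mu k < Real.log (4 / k) ∧ -Real.log (hh k) < mu k := by
  obtain ⟨x, x0, xk, a, b, c⟩ := step h0 h1
  have := mu_bounds x0 (xk.trans_lt (by nlinarith))
  constructor <;> linarith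

lemma ellK_cont {a : ℝ} (h0 : 0 ≤ a) (h1 : a < 1) : ContinuousOn ellK (Icc 0 a) := by
  have hc : 0 < 1 - a ^ 2 := by nlinarith
  have : Continuous (fun r : ℝ => ∫ θ in (0:ℝ)..(Real.pi / 2),
      (√(max (1 - r ^ 2 * Real.sin θ ^ 2) (1 - a ^ 2)))⁻¹) := by
    apply intervalIntegral.continuous_parametric_intervalIntegral_of_continuous'
    apply Continuous.inv₀ (by fun_prop)
    rintro ⟨r, θ⟩
    exact (Real.sqrt_pos.2 (lt_max_of_lt_right hc)).ne'
  refine this.continuousOn.congr ?_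
  intro r hr
  rw [ellK_eq hr.1 (hr.2.trans_lt h1)]
  congr 1
  ext θ
  rw [max_eq_left]
  have h := Real.sin_sq_le_one θ
  have : r ^ 2 ≤ a ^ 2 := pow_le_pow_left₀ hr.1 hr.2 2
  nlinarith [sq_nonneg r]

lemma mu_cont {a b : ℝ} (h0 : 0 < a) (h1 : b < 1) : ContinuousOn mu (Icc a b) := by
  rcases lt_or_ge b a with hab | hab
  · rw [Icc_eq_empty (by linarith)]; exact continuousOn_empty _
  unfold mu
  apply ContinuousOn.div
  · apply continuousOn_const.mul
    apply (ellK_cont (Real.sqrt_nonneg (1 - a ^ 2)) (ell_compl_lt h0)).comp (by fun_prop)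
    intro r hr
    refine ⟨Real.sqrt_nonneg _, Real.sqrt_le_sqrt ?_⟩
    have : a ^ 2 ≤ r ^ 2 := pow_le_pow_left₀ h0.le hr.1 2
    linarith
  · exact (ellK_cont (h0.le.trans hab) h1).mono (Icc_subset_Icc h0.le le_rfl)
  · intro r hr
    exact (ellK_pos (h0.le.trans hr.1) (hr.2.trans_lt h1)).ne'

lemma mu_compl {k : ℝ} (h0 : 0 < k) (h1 : k < 1) : mu (√(1 - k ^ 2)) = Real.pi ^ 2 / 4 / mu k := by
  have hp := ellK_pos h0.le h1
  have hq := ellK_pos (Real.sqrt_nonneg _) (ell_compl_lt h0)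
  have hpi := Real.pi_pos
  unfold mu
  rw [Real.sq_sqrt (by nlinarith), show 1 - (1 - k ^ 2) = k ^ 2 by ring, Real.sqrt_sq h0.le]
  field_simp
  norm_num

lemma mu_mid : mu (√(1 / 2)) = Real.pi / 2 := by
  have h1 : √(1 / 2 : ℝ) < 1 := by rw [Real.sqrt_lt' one_pos]; norm_num
  have hp := ellK_pos (Real.sqrt_nonneg _) h1
  unfold mu
  rw [Real.sq_sqrt (by norm_num), show (1 - 1 / 2 : ℝ) = 1 / 2 by norm_num]
  field_simp

lemma mu_surj {M : ℝ} (hM : Real.pi / 2 ≤ M) : ∃ k : ℝ, 0 < k ∧ k < 1 ∧ mu k = M := by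
  have hpi := Real.pi_gt_three
  have h1 : √(1 / 2 : ℝ) < 1 := by rw [Real.sqrt_lt' one_pos]; norm_num
  have h2 : 1 / 2 < √(1 / 2 : ℝ) := by rw [Real.lt_sqrt (by norm_num)]; norm_num
  have a0 := Real.exp_pos (-(2 * M))
  have a1 : Real.exp (-(2 * M)) ≤ 1 / 2 := by
    rw [Real.exp_neg, inv_eq_one_div]
    apply one_div_le_one_div_of_le (by norm_num)
    linarith [Real.add_one_le_exp (2 * M)]
  have b := le_mu a0 (by linarith)
  have hw : 1 / 2 ≤ √(1 - Real.exp (-(2 * M)) ^ 2) := by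
    apply Real.le_sqrt_of_sq_le; nlinarith
  have hl : Real.log (1 / Real.exp (-(2 * M))) = 2 * M := by
    rw [one_div, Real.log_inv, Real.log_exp]; ring
  rw [hl] at b
  have := intermediate_value_Icc' (a1.trans h2.le) (mu_cont a0 h1)
  obtain ⟨k, hk, hkM⟩ := this (show M ∈ Icc _ _ from ⟨by rw [mu_mid]; exact hM, by nlinarith⟩)
  exact ⟨k, a0.trans_le hk.1, hk.2.trans_lt h1, hkM⟩

lemma final_alg {q s t : ℝ} (q0 : 0 < q) (q1 : q < 1 / 2) (t0 : 0 < t) (t1 : t < 1)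
    (hs : s = 2 * t / (1 + t ^ 2)) (hu : t < 2 * q) (hl : 2 * q / (1 + q ^ 2) < t) :
    1 / 16 * q⁻¹ - 1 / 2 + (1 / 4 + 1 / (4 * q ^ 2 + 1)) * q < (1 - s) ^ 2 / (4 * s) ∧
    (1 - s) ^ 2 / (4 * s) < 1 / 16 * q⁻¹ - 1 / 2 +
      (1 / 16 * (1 + 4 * (5 * q ^ 4 + 14 * q ^ 2 + 5) / (q ^ 6 + 7 * q ^ 4 + 7 * q ^ 2 + 1))) * q := by
  have s0 : 0 < s := by rw [hs]; positivity
  have s1 : s < 1 := by rw [hs, div_lt_one (by positivity)]; nlinarith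
  have e : (1 - s) ^ 2 / (4 * s) = 1 / 4 * (s⁻¹ + s) - 1 / 2 := by field_simp; ring
  have mono : ∀ a b : ℝ, 0 < a → a < b → a * b < 1 → b⁻¹ + b < a⁻¹ + a := by
    intro a b ha hab hb
    have hb0 : 0 < b := ha.trans hab
    have : a⁻¹ + a - (b⁻¹ + b) = (b - a) * (1 - a * b) / (a * b) := by field_simp; ring
    have : 0 < a⁻¹ + a - (b⁻¹ + b) := by
      rw [this]; apply div_pos (mul_pos _ _) (by positivity) <;> linarith
    linarith
  have up : ∀ a b : ℝ, 0 < a → a < b → a * b < 1 → 2 * a / (1 + a ^ 2) < 2 * b / (1 + b ^ 2) := by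
    intro a b ha hab hb
    rw [div_lt_div_iff₀ (by positivity) (by positivity)]
    have : 0 < (b - a) * (1 - a * b) := mul_pos (by linarith) (by linarith)
    nlinarith
  rw [e]
  constructor
  · set z := 2 * (2 * q) / (1 + (2 * q) ^ 2) with hz
    have z0 : 0 < z := by positivity
    have ez : 1 / 16 * q⁻¹ - 1 / 2 + (1 / 4 + 1 / (4 * q ^ 2 + 1)) * q = 1 / 4 * (z⁻¹ + z) - 1 / 2 := by
      rw [hz]; field_simp; ring
    rw [ez]
    have z1 : z ≤ 1 := by rw [hz, div_le_one (by positivity)]; nlinarith [sq_nonneg (1 - 2 * q)]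
    have hsz : s < z := by
      rw [hs, hz]; exact up t (2 * q) t0 hu (by nlinarith)
    have := mono s z s0 hsz (by nlinarith)
    linarith
  · set y := 2 * q / (1 + q ^ 2) with hy
    have y0 : 0 < y := by positivity
    set z := 2 * y / (1 + y ^ 2) with hz
    have z0 : 0 < z := by positivity
    have hzs : z < s := by rw [hs, hz]; exact up y t y0 hl (by nlinarith)
    have := mono z s z0 hzs (by nlinarith)
    have ez : 1 / 16 * q⁻¹ - 1 / 2 +
      (1 / 16 * (1 + 4 * (5 * q ^ 4 + 14 * q ^ 2 + 5) / (q ^ 6 + 7 * q ^ 4 + 7 * q ^ 2 + 1))) * q = 1 / 4 * (z⁻¹ + z) - 1 / 2 := by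
      have d : q ^ 6 + 7 * q ^ 4 + 7 * q ^ 2 + 1 = (1 + q ^ 2) * ((1 + q ^ 2) ^ 2 + 4 * q ^ 2) := by ring
      have z' : z = 4 * q * (1 + q ^ 2) / ((1 + q ^ 2) ^ 2 + 4 * q ^ 2) := by
        rw [hz, hy]; field_simp; ring
      rw [z', d]; field_simp; ring
    linarith

theorem stmt_9 (lam : ℝ → ℝ)
    (hlam : ∀ K : ℝ, 0 < K → ∀ r ∈ Set.Ioo (0:ℝ) 1,
      mu r = Real.pi / (2 * K) → lam K = r ^ 2 / (1 - r ^ 2)) :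
    ∀ K : ℝ, 1 < K →
      1 / 16 * Real.exp (Real.pi * K) - 1 / 2 +
        (1 / 4 + 1 / (4 * Real.exp (-(2 * Real.pi * K)) + 1)) * Real.exp (-(Real.pi * K))
        < lam K ∧
      lam K <
        1 / 16 * Real.exp (Real.pi * K) - 1 / 2 +
        (1 / 16 * (1 + 4 * (5 * Real.exp (-(4 * Real.pi * K)) + 14 * Real.exp (-(2 * Real.pi * K)) + 5) /
          (Real.exp (-(6 * Real.pi * K)) + 7 * Real.exp (-(4 * Real.pi * K)) +
            7 * Real.exp (-(2 * Real.pi * K)) + 1))) * Real.exp (-(Real.pi * K)) := by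
  intro K hK
  have hpi := Real.pi_gt_three
  obtain ⟨k, k0, k1, hk⟩ := mu_surj (M := Real.pi * K / 2) (by nlinarith)
  have hp : 0 < 1 - k ^ 2 := by nlinarith
  have hr : mu (√(1 - k ^ 2)) = Real.pi / (2 * K) := by
    rw [mu_compl k0 k1, hk]
    field_simp
    norm_num
  have hL := hlam K (by linarith) (√(1 - k ^ 2)) ⟨Real.sqrt_pos.2 hp, ell_compl_lt k0⟩ hr
  rw [Real.sq_sqrt hp.le, show 1 - (1 - k ^ 2) = k ^ 2 by ring] at hL
  obtain ⟨s, s0, s1, hks, hms⟩ := landen_down k0 k1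
  obtain ⟨t, t0, t1, hst, hmt⟩ := landen_down (k := s ^ 2) (by positivity) (by nlinarith)
  have hLs : lam K = (1 - s ^ 2) ^ 2 / (4 * s ^ 2) := by
    rw [hL, hks]; field_simp; ring
  have hmt' : mu (t ^ 2) = 2 * (Real.pi * K) := by rw [hmt, hms, hk]; ring
  obtain ⟨b1, b2⟩ := mu_bounds_strict (k := t ^ 2) (by positivity) (by nlinarith)
  rw [hmt'] at b1 b2
  have E2 : Real.exp (-(2 * Real.pi * K)) = Real.exp (-(Real.pi * K)) ^ 2 := by
    rw [← Real.exp_nat_mul]; congr 1; push_cast; ring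
  have E4 : Real.exp (-(4 * Real.pi * K)) = Real.exp (-(Real.pi * K)) ^ 4 := by
    rw [← Real.exp_nat_mul]; congr 1; push_cast; ring
  have E6 : Real.exp (-(6 * Real.pi * K)) = Real.exp (-(Real.pi * K)) ^ 6 := by
    rw [← Real.exp_nat_mul]; congr 1; push_cast; ring
  have E1 : Real.exp (Real.pi * K) = (Real.exp (-(Real.pi * K)))⁻¹ := by
    rw [Real.exp_neg, inv_inv]
  have q0 : 0 < Real.exp (-(Real.pi * K)) := Real.exp_pos _
  have q1 : Real.exp (-(Real.pi * K)) < 1 / 2 := by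
    rw [Real.exp_neg, inv_eq_one_div]
    apply one_div_lt_one_div_of_lt (by norm_num)
    nlinarith [Real.add_one_le_exp (Real.pi * K)]
  have B1 : Real.exp (2 * (Real.pi * K)) < 4 / t ^ 2 := (Real.lt_log_iff_exp_lt (by positivity)).1 b1
  have B1' : Real.exp (2 * (Real.pi * K)) = (Real.exp (-(Real.pi * K)) ^ 2)⁻¹ := by
    rw [← E2, ← Real.exp_neg]; congr 1; ring
  obtain ⟨e0, e1, he⟩ := hh_spec (k := t ^ 2) (by positivity) (by nlinarith)
  have B2 : Real.exp (-(2 * Real.pi * K)) < hh (t ^ 2) := (Real.lt_log_iff_exp_lt e0).1 (by linarith)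
  rw [B1'] at B1
  rw [E2] at B2
  rw [E1, E2, E4, E6, hLs]
  set q := Real.exp (-(Real.pi * K))
  apply final_alg q0 q1 t0 t1 hst
  · rw [inv_eq_one_div, div_lt_div_iff₀ (by positivity) (by positivity)] at B1
    exact lt_of_pow_lt_pow_left₀ 2 (by positivity) (by nlinarith)
  · have := H_lt (by positivity) B2 e1
    rw [← he, show 4 * q ^ 2 / (1 + q ^ 2) ^ 2 = (2 * q / (1 + q ^ 2)) ^ 2 by rw [div_pow]; ring] at this
    exact lt_of_pow_lt_pow_left₀ 2 t0.le this
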